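/- Let G = (𝒩, w) be a closed integer octagonal graph (in particular, G has no negative weight proper cycles), and define G_t = (𝒩, w_t) by w_t(i,ī) = 2⌊w(i,ī)/2⌋ for all i ∈ 𝒩 and w_t(i,j) = w(i,j) whenever j ≠ ī. If G_t has a proper cycle of negative weight, then there exists i ∈ 𝒩 such that w_t(i,ī) + w_t(ī,i) < 0. -/

import Mathlib

/-- Extended rationals: ℚ ∪ {+∞}. -/
abbrev Qinf := WithTop ℚ

/-- Weight of a path (list of nodes): sum of the weights of its arcs. -/
def pathWeight {N : Type*} (w : N → N → Qinf) : List N → Qinf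
  | [] => 0
  | [_] => 0
  | a :: b :: l => w a b + pathWeight w (b :: l)

/-- A proper cycle: at least two arcs, first node equals last node,
    consecutive nodes distinct. -/
def IsProperCycle {N : Type*} (l : List N) : Prop :=
  3 ≤ l.length ∧ l.head? = l.getLast? ∧ l.Chain' (· ≠ ·)

/-- A graph is consistent if it has no proper cycle of negative weight. -/
def Consistent {N : Type*} (w : N → N → Qinf) : Prop :=
  ∀ l : List N, IsProperCycle l → 0 ≤ pathWeight w l

/-- A consistent graph is closed if self-loops have weight 0 and the
    triangle inequality holds. -/
def ClosedG {N : Type*} (w : N → N → Qinf) : Prop :=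
  Consistent w ∧ (∀ i, w i i = 0) ∧ ∀ i j k, w i j ≤ w i k + w k j

/-- The "bar" involution on nodes: ī = i+1 for even i, ī = i-1 for odd i. -/
def bar {n : ℕ} (i : Fin (2 * n)) : Fin (2 * n) :=
  if _h : i.val % 2 = 0 then ⟨i.val + 1, by have := i.isLt; omega⟩
  else ⟨i.val - 1, by have := i.isLt; omega⟩

/-- Coherence: w(i,j) = w(j̄,ī). -/
def Coherent {n : ℕ} (w : Fin (2 * n) → Fin (2 * n) → Qinf) : Prop :=
  ∀ i j, w i j = w (bar j) (bar i)

/-- An octagonal graph: consistent and coherent. -/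
def Octagonal {n : ℕ} (w : Fin (2 * n) → Fin (2 * n) → Qinf) : Prop :=
  Consistent w ∧ Coherent w

/-- Pointwise order on graphs. -/
def GLe {n : ℕ} (w₁ w₂ : Fin (2 * n) → Fin (2 * n) → Qinf) : Prop :=
  ∀ i j, w₁ i j ≤ w₂ i j

/-- Halving on ℚ∞ (with +∞/2 = +∞). -/
def half (x : Qinf) : Qinf := x.map (fun q => q / 2)

/-- Floored halving on ℚ∞ (with ⌊+∞/2⌋ = +∞). -/
def fhalf (x : Qinf) : Qinf := x.map (fun q => ((⌊q / 2⌋ : ℤ) : ℚ))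

/-- Integer weights: every weight is an integer or +∞. -/
def IntWeights {n : ℕ} (w : Fin (2 * n) → Fin (2 * n) → Qinf) : Prop :=
  ∀ i j, w i j = ⊤ ∨ ∃ d : ℤ, w i j = ((d : ℚ) : Qinf)

/-- A strongly closed octagonal graph. -/
def StronglyClosed {n : ℕ} (w : Fin (2 * n) → Fin (2 * n) → Qinf) : Prop :=
  Octagonal w ∧ ClosedG w ∧ ∀ i j, 2 * w i j ≤ w i (bar i) + w (bar j) j

/-- A tightly closed integer octagonal graph. -/
def TightlyClosed {n : ℕ} (w : Fin (2 * n) → Fin (2 * n) → Qinf) : Prop :=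
  IntWeights w ∧ StronglyClosed w ∧
    ∀ i, w i (bar i) = ⊤ ∨ ∃ d : ℤ, w i (bar i) = (((2 * d : ℤ) : ℚ) : Qinf)


theorem tt_bar_bar {n : ℕ} (i : Fin (2 * n)) : bar (bar i) = i := by
  apply Fin.ext
  have h : ∀ j : Fin (2 * n), (bar j).val = if j.val % 2 = 0 then j.val + 1 else j.val - 1 := by
    intro j
    unfold bar
    split_ifs <;> rfl
  rw [h, h]
  split_ifs <;> omega

theorem tt_top : (2 : Qinf) * fhalf ⊤ = ⊤ := by
  show (2 : Qinf) * ⊤ = ⊤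
  exact WithTop.mul_top (by norm_num)

theorem tt_coe (d : ℤ) : (2 : Qinf) * fhalf ((d : ℚ) : Qinf) = (((2 * (d / 2) : ℤ) : ℚ) : Qinf) := by
  have h : fhalf ((d : ℚ) : Qinf) = (((d / 2 : ℤ) : ℚ) : Qinf) := by
    show (((⌊(d : ℚ) / 2⌋ : ℤ) : ℚ) : Qinf) = _
    have : ⌊(d : ℚ) / 2⌋ = d / 2 := by
      have := Rat.floor_intCast_div_natCast d 2
      exact_mod_cast this
    rw [this]
  rw [h]
  have h2 : (2 : Qinf) = ((2 : ℚ) : Qinf) := rfl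
  rw [h2, ← WithTop.coe_mul]
  push_cast
  rfl

/-- Tightened unary weights still satisfy the relevant triangle inequality. -/
theorem tt_key {n : ℕ} (w : Fin (2 * n) → Fin (2 * n) → Qinf)
    (hc : Coherent w) (hint : IntWeights w)
    (htri : ∀ i j k, w i j ≤ w i k + w k j) (i k : Fin (2 * n)) :
    2 * fhalf (w i (bar i)) ≤ w i k + w i k + 2 * fhalf (w k (bar k)) := by
  have h : w i (bar i) ≤ w i k + (w k (bar k) + w i k) := by
    refine (htri i (bar i) k).trans ?_
    gcongr
    refine (htri k (bar i) (bar k)).trans ?_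
    rw [← hc i k]
  rcases hint i k with h1 | ⟨a, h1⟩
  · simp [h1]
  rcases hint k (bar k) with h2 | ⟨b, h2⟩
  · rw [h2, tt_top]; simp
  rcases hint i (bar i) with h3 | ⟨c, h3⟩
  · rw [h1, h2, h3, ← WithTop.coe_add, ← WithTop.coe_add] at h
    exact absurd (top_le_iff.1 h) (WithTop.coe_ne_top)
  rw [h1, h2, h3, ← WithTop.coe_add, ← WithTop.coe_add, WithTop.coe_le_coe] at h
  rw [h1, h2, h3, tt_coe, tt_coe, ← WithTop.coe_add, ← WithTop.coe_add, WithTop.coe_le_coe]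
  norm_cast at h ⊢
  omega

theorem tt_path {n : ℕ} (w : Fin (2 * n) → Fin (2 * n) → Qinf)
    (hc : Coherent w) (hint : IntWeights w) (hz : ∀ i, w i i = 0)
    (htri : ∀ i j k, w i j ≤ w i k + w k j)
    (wt : Fin (2 * n) → Fin (2 * n) → Qinf)
    (hwt : ∀ i j, wt i j = if j = bar i then 2 * fhalf (w i j) else w i j)
    (t : Fin (2 * n) → Qinf) (ht : ∀ i, t i = 2 * fhalf (w i (bar i)))
    (hpos : ∀ i, 0 ≤ t i + t (bar i)) (b : Fin (2 * n)) :
    ∀ (l : List (Fin (2 * n))) (a : Fin (2 * n)), (a :: l).getLast? = some b →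
      w a b ≤ pathWeight wt (a :: l) ∨
      t a + t (bar b) ≤ pathWeight wt (a :: l) + pathWeight wt (a :: l) := by
  have key : ∀ i k, t i ≤ w i k + w i k + t k := fun i k => by
    rw [ht, ht]; exact tt_key w hc hint htri i k
  have key' : ∀ c, t (bar b) ≤ t (bar c) + (w c b + w c b) := fun c => by
    have := key (bar b) (bar c)
    rw [← hc c b] at this
    rwa [add_comm]
  intro l
  induction l with
  | nil =>
    intro a h
    have : a = b := by simpa using h
    subst this
    left
    simp [pathWeight, hz]
  | cons c l ih =>
    intro a h
    have hl : (c :: l).getLast? = some b := by simpa using h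
    have hp : pathWeight wt (a :: c :: l) = wt a c + pathWeight wt (c :: l) := rfl
    rw [hp]
    have ih := ih c hl
    generalize pathWeight wt (c :: l) = P at ih ⊢
    by_cases hca : c = bar a
    · have e : wt a c = t a := by rw [hwt, if_pos hca, ht, hca]
      have e2 : bar c = a := by rw [hca, tt_bar_bar]
      rw [e]
      right
      rcases ih with ih | ih
      · calc t a + t (bar b) ≤ t a + (t (bar c) + (w c b + w c b)) := by gcongr; exact key' c
          _ ≤ t a + (t a + (P + P)) := by rw [e2]; exact add_le_add_right (add_le_add_right (add_le_add ih ih) _) _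
          _ = _ := by abel
      · calc t a + t (bar b) ≤ (t a + t (bar b)) + (t a + t (bar a)) := le_add_of_nonneg_right (hpos a)
          _ = t a + t a + (t c + t (bar b)) := by rw [hca]; abel
          _ ≤ t a + t a + (P + P) := add_le_add_right ih _
          _ = _ := by abel
    · have e : wt a c = w a c := by rw [hwt, if_neg hca]
      rw [e]
      rcases ih with ih | ih
      · left
        exact (htri a b c).trans (by gcongr)
      · right
        calc t a + t (bar b) ≤ (w a c + w a c + t c) + t (bar b) := by gcongr; exact key a c
          _ = w a c + w a c + (t c + t (bar b)) := by abel
          _ ≤ w a c + w a c + (P + P) := add_le_add_right ih _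
          _ = _ := by abel

/-- If tightening a closed integer octagonal graph creates a
    negative cycle, then it already creates a negative two-arc cycle on some
    pair (i, ī). -/
theorem tightening_negative_cycle_on_unary_pair
    {n : ℕ} (hn : 1 ≤ n) (w : Fin (2 * n) → Fin (2 * n) → Qinf)
    (hoct : Octagonal w) (hint : IntWeights w) (hcl : ClosedG w)
    (wt : Fin (2 * n) → Fin (2 * n) → Qinf)
    (hwt : ∀ i j, wt i j = if j = bar i then 2 * fhalf (w i j) else w i j)
    (hneg : ∃ l : List (Fin (2 * n)), IsProperCycle l ∧ pathWeight wt l < 0) :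
    ∃ i : Fin (2 * n), wt i (bar i) + wt (bar i) i < 0 := by
  by_contra hcon
  push Not at hcon
  obtain ⟨l, ⟨hlen, hhl, -⟩, hlt⟩ := hneg
  obtain ⟨-, hz, htri⟩ := hcl
  have e : ∀ i, wt i (bar i) = 2 * fhalf (w i (bar i)) := fun i => by rw [hwt, if_pos rfl]
  have hpos : ∀ i, 0 ≤ wt i (bar i) + wt (bar i) (bar (bar i)) := fun i => by
    rw [tt_bar_bar]; exact hcon i
  cases l with
  | nil => simp at hlen
  | cons a l =>
    have hlast : (a :: l).getLast? = some a := by rw [← hhl]; rfl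
    rcases tt_path w hoct.2 hint hz htri wt hwt (fun i => wt i (bar i)) e hpos a l a hlast with h | h
    · rw [hz] at h
      exact absurd hlt (not_lt.2 h)
    · have h2 := (hpos a).trans h
      exact absurd ((add_le_add hlt.le le_rfl).trans_lt (by rwa [zero_add])) (not_lt.2 h2)
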